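/- Let n ≥ 0 and I ∈ P_n with runs I_1, …, I_t. Then the sum of absolute values of all entries in row I of AM_n equals ∏_{k=1}^{t} (2^{|I_k|+1} − 1); the sum of absolute values of all entries in row I of BM_n equals the same product with the factor for the last run I_t omitted when n ∈ I (and equals the full product when n ∉ I); and the sum of absolute values of all entries in row I of HM_n equals 3^{|I|}. -/

import Mathlib

/-!
Order the subsets of `[n + 1]` as those avoiding `n + 1` followed by those containing it. Then
`M_{n+1} = [[M, -M], [0, M]]`, and multiplying by the block forms of `A_{n+1}`, `B_{n+1}`,
`H_{n+1}` gives

* `AM_{n+1} = [[AM, 0], [AM, -(AM + BM)]]`,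
* `BM_{n+1} = [[AM, 0], [0, -BM]]`,
* `HM_{n+1} = [[HM, 0], [HM, -2 HM]]`.

The third recursion multiplies a row sum by `3` each time an element is adjoined to `I`
(`row_sums_h`). For the other two, corresponding entries of `AM` and `BM` never have opposite signs
(`am_mul_bm_nonneg`), so if `a` and `b` are the absolute row sums of `AM_n` and `BM_n` at `K`, those
of `AM_{n+1}` and `BM_{n+1}` are `a, a` at `K` and `2a + b, b` at `K ∪ {n + 1}`.

The products over runs obey the same recursion: adjoining `n + 1` to `K ⊆ [n]` extends the
(possibly empty) run containing `n` by one element and leaves the other runs unchanged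
(`runOf_insert_succ`, `otherRuns_insert_succ`). If that run has length `l`, then
`a = (2 ^ (l + 1) - 1) b` and `2a + b = (2 ^ (l + 2) - 1) b`.
-/

open Finset

/-- Restriction of a subset of `Fin (n+1)` to `Fin n` (forgetting the top element). -/
def resSet {n : ℕ} (I : Finset (Fin (n + 1))) : Finset (Fin n) :=
  Finset.univ.filter (fun j : Fin n => Fin.castSucc j ∈ I)

mutual
  /-- The matrix `A_n`, rows/columns indexed by subsets of `{1,…,n}` (element `j`
  of `[n]` corresponds to `j-1 : Fin n`, i.e. anti-lexicographic/binary order). -/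
  def Amat : (n : ℕ) → Matrix (Finset (Fin n)) (Finset (Fin n)) ℤ
    | 0 => Matrix.of fun _ _ => 1
    | n + 1 => Matrix.of fun I J =>
        if Fin.last n ∈ I then
          if Fin.last n ∈ J then - Bmat n (resSet I) (resSet J)
          else Amat n (resSet I) (resSet J)
        else Amat n (resSet I) (resSet J)
  /-- The matrix `B_n`. -/
  def Bmat : (n : ℕ) → Matrix (Finset (Fin n)) (Finset (Fin n)) ℤ
    | 0 => Matrix.of fun _ _ => 1
    | n + 1 => Matrix.of fun I J =>
        if Fin.last n ∈ I then
          if Fin.last n ∈ J then - Bmat n (resSet I) (resSet J)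
          else 0
        else Amat n (resSet I) (resSet J)
end

/-- The Walsh-Hadamard matrix `H_n`. -/
def Hmat : (n : ℕ) → Matrix (Finset (Fin n)) (Finset (Fin n)) ℤ
  | 0 => Matrix.of fun _ _ => 1
  | n + 1 => Matrix.of fun I J =>
      if Fin.last n ∈ I ∧ Fin.last n ∈ J then - Hmat n (resSet I) (resSet J)
      else Hmat n (resSet I) (resSet J)

/-- The Möbius matrix `M_n` of the boolean lattice. -/
def Mobmat (n : ℕ) : Matrix (Finset (Fin n)) (Finset (Fin n)) ℤ :=
  Matrix.of fun I J => if I ⊆ J then (-1) ^ (J \ I).card else 0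

/-- The zeta matrix `Z_n` of the boolean lattice. -/
def Zetamat (n : ℕ) : Matrix (Finset (Fin n)) (Finset (Fin n)) ℤ :=
  Matrix.of fun I J => if I ⊆ J then 1 else 0

/-- The subset of `[n] = {1,…,n}` corresponding to a subset of `Fin n`. -/
def natSet {n : ℕ} (I : Finset (Fin n)) : Finset ℕ := Finset.image (fun j : Fin n => (j : ℕ) + 1) I

/-- The ordinal number of a subset in the anti-lexicographic order. -/
def ordFin {n : ℕ} (I : Finset (Fin n)) : ℕ := ∑ j ∈ I, 2 ^ (j : ℕ)

/-- The run (maximal interval of consecutive integers) of `I` containing `j`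
(empty if `j ∉ I`). -/
def runOf (I : Finset ℕ) (j : ℕ) : Finset ℕ :=
  I.filter (fun i => ∀ k ∈ Finset.Icc (min i j) (max i j), k ∈ I)

/-- The set of runs (maximal intervals of consecutive integers) of `I`. -/
def runsOf (I : Finset ℕ) : Finset (Finset ℕ) := I.image (runOf I)

/-- `P` is a prefix of the interval `R`: it consists of an initial segment of `R`. -/
def IsPrefixOf (P R : Finset ℕ) : Prop :=
  P ⊆ R ∧ ∀ i ∈ R, ∀ j ∈ P, i ≤ j → i ∈ P

/-! ### Block structure -/

/-- The copy of `K ⊆ [n]` inside `[n + 1]`. -/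
def liftSet {n : ℕ} (K : Finset (Fin n)) : Finset (Fin (n + 1)) := K.map Fin.castSuccEmb

/-- `K ∪ {n + 1}` as a subset of `[n + 1]`, for `K ⊆ [n]`. -/
def topSet {n : ℕ} (K : Finset (Fin n)) : Finset (Fin (n + 1)) :=
  insert (Fin.last n) (liftSet K)

lemma last_notMem_liftSet {n : ℕ} (K : Finset (Fin n)) : Fin.last n ∉ liftSet K := by
  simp [liftSet, Fin.castSucc_ne_last]

lemma last_mem_topSet {n : ℕ} (K : Finset (Fin n)) : Fin.last n ∈ topSet K := by
  simp [topSet]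

lemma castSucc_mem_liftSet {n : ℕ} (K : Finset (Fin n)) (j : Fin n) :
    j.castSucc ∈ liftSet K ↔ j ∈ K := by
  simp [liftSet]

lemma castSucc_mem_topSet {n : ℕ} (K : Finset (Fin n)) (j : Fin n) :
    j.castSucc ∈ topSet K ↔ j ∈ K := by
  simp [topSet, liftSet, Fin.castSucc_ne_last]

lemma resSet_liftSet {n : ℕ} (K : Finset (Fin n)) : resSet (liftSet K) = K := by
  ext j; simp [resSet, castSucc_mem_liftSet]

lemma resSet_topSet {n : ℕ} (K : Finset (Fin n)) : resSet (topSet K) = K := by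
  ext j; simp [resSet, castSucc_mem_topSet]

lemma liftSet_resSet {n : ℕ} {I : Finset (Fin (n + 1))} (h : Fin.last n ∉ I) :
    liftSet (resSet I) = I := by
  ext j
  refine Fin.lastCases ?_ (fun j => ?_) j
  · simp [h, last_notMem_liftSet]
  · simp [castSucc_mem_liftSet, resSet]

lemma topSet_resSet {n : ℕ} {I : Finset (Fin (n + 1))} (h : Fin.last n ∈ I) :
    topSet (resSet I) = I := by
  ext j
  refine Fin.lastCases ?_ (fun j => ?_) j
  · simp [h, last_mem_topSet]
  · simp [castSucc_mem_topSet, resSet]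

lemma sum_finset_succ {n : ℕ} {β : Type*} [AddCommMonoid β] (f : Finset (Fin (n + 1)) → β) :
    ∑ J, f J = ∑ K : Finset (Fin n), f (liftSet K) + ∑ K : Finset (Fin n), f (topSet K) := by
  classical
  rw [← Finset.sum_filter_not_add_sum_filter univ (fun J => Fin.last n ∈ J)]
  congr 1
  · refine Finset.sum_nbij' resSet liftSet ?_ ?_ ?_ ?_ ?_ <;>
      simp +contextual [last_notMem_liftSet, resSet_liftSet, liftSet_resSet]
  · refine Finset.sum_nbij' resSet topSet ?_ ?_ ?_ ?_ ?_ <;>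
      simp +contextual [last_mem_topSet, resSet_topSet, topSet_resSet]

lemma topSet_not_subset_liftSet {n : ℕ} (K L : Finset (Fin n)) : ¬ topSet K ⊆ liftSet L :=
  fun h => last_notMem_liftSet L (h (last_mem_topSet K))

lemma liftSet_subset_liftSet {n : ℕ} (K L : Finset (Fin n)) :
    liftSet K ⊆ liftSet L ↔ K ⊆ L := Finset.map_subset_map

lemma liftSet_subset_topSet {n : ℕ} (K L : Finset (Fin n)) :
    liftSet K ⊆ topSet L ↔ K ⊆ L := by
  rw [topSet, Finset.subset_insert_iff_of_notMem (last_notMem_liftSet K), liftSet_subset_liftSet]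

lemma topSet_subset_topSet {n : ℕ} (K L : Finset (Fin n)) :
    topSet K ⊆ topSet L ↔ K ⊆ L := by
  rw [topSet, Finset.insert_subset_iff, liftSet_subset_topSet]
  simp [last_mem_topSet]

lemma mob_lift_lift {n : ℕ} (K L : Finset (Fin n)) :
    Mobmat (n + 1) (liftSet K) (liftSet L) = Mobmat n K L := by
  have h : liftSet L \ liftSet K = liftSet (L \ K) := by
    simp [liftSet, Finset.map_sdiff]
  simp only [Mobmat, Matrix.of_apply, liftSet_subset_liftSet, h]
  simp [liftSet]

lemma mob_lift_top {n : ℕ} (K L : Finset (Fin n)) :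
    Mobmat (n + 1) (liftSet K) (topSet L) = - Mobmat n K L := by
  have h : topSet L \ liftSet K = topSet (L \ K) := by
    rw [topSet, Finset.insert_sdiff_of_notMem _ (last_notMem_liftSet K)]
    simp [topSet, liftSet, Finset.map_sdiff]
  have hc : (topSet (L \ K)).card = (L \ K).card + 1 := by
    rw [topSet, Finset.card_insert_of_notMem (last_notMem_liftSet _)]
    simp [liftSet]
  simp only [Mobmat, Matrix.of_apply, liftSet_subset_topSet, h, hc, pow_succ]
  split_ifs <;> simp

lemma mob_top_lift {n : ℕ} (K L : Finset (Fin n)) :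
    Mobmat (n + 1) (topSet K) (liftSet L) = 0 := by
  simp [Mobmat, topSet_not_subset_liftSet]

lemma mob_top_top {n : ℕ} (K L : Finset (Fin n)) :
    Mobmat (n + 1) (topSet K) (topSet L) = Mobmat n K L := by
  have h : topSet L \ topSet K = liftSet (L \ K) := by
    ext j
    refine Fin.lastCases ?_ (fun j => ?_) j
    · simp [last_mem_topSet, last_notMem_liftSet]
    · simp [castSucc_mem_topSet, castSucc_mem_liftSet]
  simp only [Mobmat, Matrix.of_apply, topSet_subset_topSet, h]
  simp [liftSet]

lemma amat_lift {n : ℕ} (K : Finset (Fin n)) (J : Finset (Fin (n + 1))) :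
    Amat (n + 1) (liftSet K) J = Amat n K (resSet J) := by
  simp [Amat, last_notMem_liftSet, resSet_liftSet]

lemma amat_top_lift {n : ℕ} (K L : Finset (Fin n)) :
    Amat (n + 1) (topSet K) (liftSet L) = Amat n K L := by
  simp [Amat, last_notMem_liftSet, last_mem_topSet, resSet_liftSet, resSet_topSet]

lemma amat_top_top {n : ℕ} (K L : Finset (Fin n)) :
    Amat (n + 1) (topSet K) (topSet L) = - Bmat n K L := by
  simp [Amat, last_mem_topSet, resSet_topSet]

lemma bmat_lift {n : ℕ} (K : Finset (Fin n)) (J : Finset (Fin (n + 1))) :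
    Bmat (n + 1) (liftSet K) J = Amat n K (resSet J) := by
  simp [Bmat, last_notMem_liftSet, resSet_liftSet]

lemma bmat_top_lift {n : ℕ} (K L : Finset (Fin n)) :
    Bmat (n + 1) (topSet K) (liftSet L) = 0 := by
  simp [Bmat, last_notMem_liftSet, last_mem_topSet]

lemma bmat_top_top {n : ℕ} (K L : Finset (Fin n)) :
    Bmat (n + 1) (topSet K) (topSet L) = - Bmat n K L := by
  simp [Bmat, last_mem_topSet, resSet_topSet]

lemma hmat_lift {n : ℕ} (K : Finset (Fin n)) (J : Finset (Fin (n + 1))) :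
    Hmat (n + 1) (liftSet K) J = Hmat n K (resSet J) := by
  simp [Hmat, last_notMem_liftSet, resSet_liftSet]

lemma hmat_top_lift {n : ℕ} (K L : Finset (Fin n)) :
    Hmat (n + 1) (topSet K) (liftSet L) = Hmat n K L := by
  simp [Hmat, last_notMem_liftSet, resSet_liftSet, resSet_topSet]

lemma hmat_top_top {n : ℕ} (K L : Finset (Fin n)) :
    Hmat (n + 1) (topSet K) (topSet L) = - Hmat n K L := by
  simp [Hmat, last_mem_topSet, resSet_topSet]

lemma mul_mob_lift {n : ℕ} (X : Matrix (Finset (Fin (n + 1))) (Finset (Fin (n + 1))) ℤ)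
    (I : Finset (Fin (n + 1))) (L : Finset (Fin n)) :
    (X * Mobmat (n + 1)) I (liftSet L) = ∑ K, X I (liftSet K) * Mobmat n K L := by
  simp [Matrix.mul_apply, sum_finset_succ, mob_lift_lift, mob_top_lift]

lemma mul_mob_top {n : ℕ} (X : Matrix (Finset (Fin (n + 1))) (Finset (Fin (n + 1))) ℤ)
    (I : Finset (Fin (n + 1))) (L : Finset (Fin n)) :
    (X * Mobmat (n + 1)) I (topSet L) =
      ∑ K, X I (topSet K) * Mobmat n K L - ∑ K, X I (liftSet K) * Mobmat n K L := by
  simp [Matrix.mul_apply, sum_finset_succ, mob_lift_top, mob_top_top]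
  ring

lemma am_lift_lift {n : ℕ} (K L : Finset (Fin n)) :
    (Amat (n + 1) * Mobmat (n + 1)) (liftSet K) (liftSet L) = (Amat n * Mobmat n) K L := by
  rw [mul_mob_lift]
  simp [amat_lift, resSet_liftSet, Matrix.mul_apply]

lemma am_lift_top {n : ℕ} (K L : Finset (Fin n)) :
    (Amat (n + 1) * Mobmat (n + 1)) (liftSet K) (topSet L) = 0 := by
  simp [mul_mob_top, amat_lift, resSet_liftSet, resSet_topSet]

lemma am_top_lift {n : ℕ} (K L : Finset (Fin n)) :
    (Amat (n + 1) * Mobmat (n + 1)) (topSet K) (liftSet L) = (Amat n * Mobmat n) K L := by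
  rw [mul_mob_lift]
  simp [amat_top_lift, Matrix.mul_apply]

lemma am_top_top {n : ℕ} (K L : Finset (Fin n)) :
    (Amat (n + 1) * Mobmat (n + 1)) (topSet K) (topSet L) =
      -((Amat n * Mobmat n) K L + (Bmat n * Mobmat n) K L) := by
  rw [mul_mob_top]
  simp [amat_top_lift, amat_top_top, Matrix.mul_apply]
  ring

lemma bm_lift_lift {n : ℕ} (K L : Finset (Fin n)) :
    (Bmat (n + 1) * Mobmat (n + 1)) (liftSet K) (liftSet L) = (Amat n * Mobmat n) K L := by
  rw [mul_mob_lift]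
  simp [bmat_lift, resSet_liftSet, Matrix.mul_apply]

lemma bm_lift_top {n : ℕ} (K L : Finset (Fin n)) :
    (Bmat (n + 1) * Mobmat (n + 1)) (liftSet K) (topSet L) = 0 := by
  simp [mul_mob_top, bmat_lift, resSet_liftSet, resSet_topSet]

lemma bm_top_lift {n : ℕ} (K L : Finset (Fin n)) :
    (Bmat (n + 1) * Mobmat (n + 1)) (topSet K) (liftSet L) = 0 := by
  simp [mul_mob_lift, bmat_top_lift]

lemma bm_top_top {n : ℕ} (K L : Finset (Fin n)) :
    (Bmat (n + 1) * Mobmat (n + 1)) (topSet K) (topSet L) = -(Bmat n * Mobmat n) K L := by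
  rw [mul_mob_top]
  simp [bmat_top_lift, bmat_top_top, Matrix.mul_apply]

lemma hm_lift_lift {n : ℕ} (K L : Finset (Fin n)) :
    (Hmat (n + 1) * Mobmat (n + 1)) (liftSet K) (liftSet L) = (Hmat n * Mobmat n) K L := by
  rw [mul_mob_lift]
  simp [hmat_lift, resSet_liftSet, Matrix.mul_apply]

lemma hm_lift_top {n : ℕ} (K L : Finset (Fin n)) :
    (Hmat (n + 1) * Mobmat (n + 1)) (liftSet K) (topSet L) = 0 := by
  simp [mul_mob_top, hmat_lift, resSet_liftSet, resSet_topSet]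

lemma hm_top_lift {n : ℕ} (K L : Finset (Fin n)) :
    (Hmat (n + 1) * Mobmat (n + 1)) (topSet K) (liftSet L) = (Hmat n * Mobmat n) K L := by
  rw [mul_mob_lift]
  simp [hmat_top_lift, Matrix.mul_apply]

lemma hm_top_top {n : ℕ} (K L : Finset (Fin n)) :
    (Hmat (n + 1) * Mobmat (n + 1)) (topSet K) (topSet L) = -2 * (Hmat n * Mobmat n) K L := by
  rw [mul_mob_top]
  simp [hmat_top_lift, hmat_top_top, Matrix.mul_apply]
  ring

lemma exists_lift_or_top {n : ℕ} (I : Finset (Fin (n + 1))) :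
    (∃ K, I = liftSet K) ∨ ∃ K, I = topSet K := by
  by_cases h : Fin.last n ∈ I
  · exact Or.inr ⟨_, (topSet_resSet h).symm⟩
  · exact Or.inl ⟨_, (liftSet_resSet h).symm⟩

/-- Corresponding entries of `AM_n` and `BM_n` never have opposite signs, so nothing cancels in
the block `-(AM_n + BM_n)` of `AM_{n+1}`. -/
lemma am_mul_bm_nonneg (n : ℕ) : ∀ I J : Finset (Fin n),
    0 ≤ (Amat n * Mobmat n) I J * (Bmat n * Mobmat n) I J := by
  induction n with
  | zero =>
    intro I J
    have h : Amat 0 = Bmat 0 := by ext; simp [Amat, Bmat]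
    rw [h]
    exact mul_self_nonneg _
  | succ n ih =>
    intro I J
    rcases exists_lift_or_top I with ⟨K, rfl⟩ | ⟨K, rfl⟩ <;>
      rcases exists_lift_or_top J with ⟨L, rfl⟩ | ⟨L, rfl⟩
    · rw [am_lift_lift, bm_lift_lift]
      exact mul_self_nonneg _
    · simp [am_lift_top]
    · simp [bm_top_lift]
    · rw [am_top_top, bm_top_top]
      nlinarith [ih K L, mul_self_nonneg ((Bmat n * Mobmat n) K L)]

lemma natAbs_add_of_mul_nonneg {a b : ℤ} (h : 0 ≤ a * b) :
    (a + b).natAbs = a.natAbs + b.natAbs := by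
  rcases mul_nonneg_iff.1 h with h | h <;> omega

/-! ### Runs -/

lemma mem_runOf {S : Finset ℕ} {i j : ℕ} :
    i ∈ runOf S j ↔ i ∈ S ∧ ∀ k, min i j ≤ k → k ≤ max i j → k ∈ S := by
  simp only [runOf, Finset.mem_filter, Finset.mem_Icc, and_imp]

lemma self_mem_runOf {S : Finset ℕ} {j : ℕ} (h : j ∈ S) : j ∈ runOf S j := by
  rw [mem_runOf]
  refine ⟨h, fun k h1 h2 => ?_⟩
  obtain rfl : k = j := by omega
  exact h

lemma mem_runOf_symm {S : Finset ℕ} {i j : ℕ} (h : i ∈ runOf S j) : j ∈ runOf S i := by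
  rw [mem_runOf] at *
  exact ⟨h.2 j (by omega) (by omega), fun k h1 h2 => h.2 k (by omega) (by omega)⟩

lemma mem_runOf_trans {S : Finset ℕ} {i j k : ℕ} (h : i ∈ runOf S j) (h' : j ∈ runOf S k) :
    i ∈ runOf S k := by
  rw [mem_runOf] at *
  refine ⟨h.1, fun l h1 h2 => ?_⟩
  by_cases hl : min i j ≤ l ∧ l ≤ max i j
  · exact h.2 l hl.1 hl.2
  · exact h'.2 l (by omega) (by omega)

lemma runOf_eq_of_mem {S : Finset ℕ} {i j : ℕ} (h : i ∈ runOf S j) : runOf S i = runOf S j := by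
  ext k
  exact ⟨fun hk => mem_runOf_trans hk h, fun hk => mem_runOf_trans hk (mem_runOf_symm h)⟩

lemma runOf_eq_empty {S : Finset ℕ} {j : ℕ} (h : j ∉ S) : runOf S j = ∅ := by
  refine Finset.eq_empty_of_forall_notMem fun i hi => h ?_
  exact (mem_runOf.1 hi).2 j (by omega) (by omega)

lemma empty_notMem_runsOf (S : Finset ℕ) : ∅ ∉ runsOf S := by
  simp only [runsOf, Finset.mem_image, not_exists, not_and]
  intro j hj h
  have := self_mem_runOf hj
  simp [h] at this

/-- The runs of `S` other than the one containing `m`. All runs are retained when `m ∉ S`, since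
`runOf S m` is then empty and is not a run. -/
def otherRuns (S : Finset ℕ) (m : ℕ) : Finset (Finset ℕ) := (runsOf S).erase (runOf S m)

lemma otherRuns_of_notMem {S : Finset ℕ} {m : ℕ} (h : m ∉ S) : otherRuns S m = runsOf S := by
  rw [otherRuns, runOf_eq_empty h, Finset.erase_eq_of_notMem (empty_notMem_runsOf S)]

lemma otherRuns_eq_image (S : Finset ℕ) (m : ℕ) :
    otherRuns S m = (S \ runOf S m).image (runOf S) := by
  ext R
  simp only [otherRuns, runsOf, Finset.mem_erase, Finset.mem_image, Finset.mem_sdiff]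
  constructor
  · rintro ⟨h, j, hj, rfl⟩
    exact ⟨j, ⟨hj, fun h' => h (runOf_eq_of_mem h')⟩, rfl⟩
  · rintro ⟨j, ⟨hj, h⟩, rfl⟩
    exact ⟨fun h' => h (h' ▸ self_mem_runOf hj), j, hj, rfl⟩

lemma prod_runsOf (S : Finset ℕ) (m : ℕ) :
    ∏ R ∈ runsOf S, (2 ^ (R.card + 1) - 1) =
      (2 ^ ((runOf S m).card + 1) - 1) * ∏ R ∈ otherRuns S m, (2 ^ (R.card + 1) - 1) := by
  by_cases h : m ∈ S
  · exact (Finset.mul_prod_erase _ (fun R : Finset ℕ => 2 ^ (R.card + 1) - 1)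
      (Finset.mem_image_of_mem (runOf S) h)).symm
  · rw [otherRuns_of_notMem h, runOf_eq_empty h]
    simp

lemma runOf_insert_succ {T : Finset ℕ} {m : ℕ} (hT : ∀ x ∈ T, x ≤ m) :
    runOf (insert (m + 1) T) (m + 1) = insert (m + 1) (runOf T m) := by
  ext i
  simp only [mem_runOf, Finset.mem_insert]
  constructor
  · rintro ⟨rfl | hi, h⟩
    · exact Or.inl rfl
    · have := hT i hi
      refine Or.inr ⟨hi, fun k h1 h2 => ?_⟩
      rcases h k (by omega) (by omega) with h | h
      · omega
      · exact h
  · rintro (rfl | ⟨hi, h⟩)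
    · exact ⟨Or.inl rfl, fun k h1 h2 => Or.inl (by omega)⟩
    · have := hT i hi
      refine ⟨Or.inr hi, fun k h1 h2 => ?_⟩
      by_cases hk : k = m + 1
      · exact Or.inl hk
      · exact Or.inr (h k (by omega) (by omega))

lemma runOf_insert_of_notMem {T : Finset ℕ} {m j : ℕ} (hT : ∀ x ∈ T, x ≤ m) (hj : j ∈ T)
    (hjm : j ∉ runOf T m) : runOf (insert (m + 1) T) j = runOf T j := by
  have hjle := hT j hj
  have hne : j ∉ runOf (insert (m + 1) T) (m + 1) := by
    rw [runOf_insert_succ hT, Finset.mem_insert]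
    rintro (h | h)
    · omega
    · exact hjm h
  ext i
  constructor
  · intro h
    have hi : i ≠ m + 1 := by
      rintro rfl
      exact hne (mem_runOf_symm h)
    simp only [mem_runOf, Finset.mem_insert] at h ⊢
    have hiT := h.1.resolve_left hi
    have := hT i hiT
    exact ⟨hiT, fun k h1 h2 => (h.2 k h1 h2).resolve_left (by omega)⟩
  · intro h
    simp only [mem_runOf, Finset.mem_insert] at h ⊢
    exact ⟨Or.inr h.1, fun k h1 h2 => Or.inr (h.2 k h1 h2)⟩

/-- Adjoining `m + 1` to a set bounded by `m` only affects the run containing `m`. -/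
lemma otherRuns_insert_succ {T : Finset ℕ} {m : ℕ} (hT : ∀ x ∈ T, x ≤ m) :
    otherRuns (insert (m + 1) T) (m + 1) = otherRuns T m := by
  have h : insert (m + 1) T \ runOf (insert (m + 1) T) (m + 1) = T \ runOf T m := by
    rw [runOf_insert_succ hT]
    ext i
    simp only [Finset.mem_sdiff, Finset.mem_insert, not_or]
    constructor
    · rintro ⟨h1, h2, h3⟩
      exact ⟨h1.resolve_left h2, h3⟩
    · rintro ⟨h1, h2⟩
      have := hT i h1
      exact ⟨Or.inr h1, by omega, h2⟩
  rw [otherRuns_eq_image, otherRuns_eq_image, h]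
  refine Finset.image_congr fun j hj => ?_
  rw [Finset.mem_coe, Finset.mem_sdiff] at hj
  exact runOf_insert_of_notMem hT hj.1 hj.2

lemma le_of_mem_natSet {n : ℕ} {I : Finset (Fin n)} : ∀ x ∈ natSet I, x ≤ n := by
  simp only [natSet, Finset.mem_image]
  rintro x ⟨j, -, rfl⟩
  omega

lemma natSet_liftSet {n : ℕ} (K : Finset (Fin n)) : natSet (liftSet K) = natSet K := by
  ext x; simp [natSet, liftSet]

lemma natSet_topSet {n : ℕ} (K : Finset (Fin n)) : natSet (topSet K) =
    insert (n + 1) (natSet K) := by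
  rw [← natSet_liftSet K]
  simp [natSet, topSet, Finset.image_insert]

lemma otherRuns_eq_ite (S : Finset ℕ) (m : ℕ) :
    (if m ∈ S then (runsOf S).erase (runOf S m) else runsOf S) = otherRuns S m := by
  split_ifs with h
  · rfl
  · exact (otherRuns_of_notMem h).symm

/-! ### Row sums -/

lemma row_sums_ab (n : ℕ) : ∀ I : Finset (Fin n),
    (∑ J, ((Amat n * Mobmat n) I J).natAbs) = ∏ R ∈ runsOf (natSet I), (2 ^ (R.card + 1) - 1) ∧
    (∑ J, ((Bmat n * Mobmat n) I J).natAbs) =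
      ∏ R ∈ otherRuns (natSet I) n, (2 ^ (R.card + 1) - 1) := by
  induction n with
  | zero =>
    intro I
    obtain rfl : I = ∅ := Subsingleton.elim _ _
    simp [natSet, otherRuns, runsOf, Matrix.mul_apply, Amat, Bmat, Mobmat]
  | succ n ih =>
    intro I
    rcases exists_lift_or_top I with ⟨K, rfl⟩ | ⟨K, rfl⟩
    · have hK : n + 1 ∉ natSet K := fun h => by
        have := le_of_mem_natSet _ h
        omega
      simp [sum_finset_succ, am_lift_lift, am_lift_top, bm_lift_lift, bm_lift_top, natSet_liftSet,
        otherRuns_of_notMem hK, (ih K).1]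
    · have hb := le_of_mem_natSet (I := K)
      have hm : n + 1 ∉ runOf (natSet K) n := fun h => by
        have := hb _ (mem_runOf.1 h).1
        omega
      obtain ⟨hA, hB⟩ := ih K
      rw [prod_runsOf _ n] at hA
      rw [natSet_topSet, prod_runsOf _ (n + 1), otherRuns_insert_succ hb, runOf_insert_succ hb,
        Finset.card_insert_of_notMem hm]
      simp only [sum_finset_succ, am_top_lift, am_top_top, bm_top_lift, bm_top_top, Int.natAbs_neg,
        natAbs_add_of_mul_nonneg (am_mul_bm_nonneg n K _), Finset.sum_add_distrib, hA, hB]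
      refine ⟨?_, by simp⟩
      -- With `a = (2 ^ (l + 1) - 1) * b`, this is `2 * a + b = (2 ^ (l + 2) - 1) * b`.
      have h1 : 1 ≤ 2 ^ ((runOf (natSet K) n).card + 1) := Nat.one_le_two_pow
      obtain ⟨c, hc⟩ := Nat.exists_eq_add_of_le h1
      have h2 : 2 ^ ((runOf (natSet K) n).card + 1 + 1) - 1 = 2 * c + 1 := by
        rw [pow_succ, hc]; omega
      rw [h2, hc, Nat.add_sub_cancel_left]
      ring

lemma row_sums_h (n : ℕ) : ∀ I : Finset (Fin n),
    (∑ J, ((Hmat n * Mobmat n) I J).natAbs) = 3 ^ I.card := by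
  induction n with
  | zero =>
    intro I
    obtain rfl : I = ∅ := Subsingleton.elim _ _
    simp [Matrix.mul_apply, Hmat, Mobmat]
  | succ n ih =>
    intro I
    rcases exists_lift_or_top I with ⟨K, rfl⟩ | ⟨K, rfl⟩
    · have hc : (liftSet K).card = K.card := Finset.card_map _
      simp [sum_finset_succ, hm_lift_lift, hm_lift_top, ih K, hc]
    · have hc : (topSet K).card = K.card + 1 := by
        rw [topSet, Finset.card_insert_of_notMem (last_notMem_liftSet _)]
        simp [liftSet]
      simp only [sum_finset_succ, hm_top_lift, hm_top_top, Int.natAbs_mul, ← Finset.mul_sum, ih K,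
        hc, pow_succ]
      norm_num
      ring

/-- Sums of absolute values of row `I`: in `AM_n` it is
`∏_k (2^{|I_k|+1} − 1)` over the runs `I_k` of `I`; in `BM_n` the factor of the last
run (the one containing `n`) is omitted when `n ∈ I`; in `HM_n` it is `3^{|I|}`. -/
theorem abs_row_sums (n : ℕ) (I : Finset (Fin n)) :
    (∑ J : Finset (Fin n), ((Amat n * Mobmat n) I J).natAbs) =
      (∏ R ∈ runsOf (natSet I), (2 ^ (R.card + 1) - 1)) ∧
    (∑ J : Finset (Fin n), ((Bmat n * Mobmat n) I J).natAbs) =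
      (∏ R ∈ (if n ∈ natSet I then (runsOf (natSet I)).erase (runOf (natSet I) n)
              else runsOf (natSet I)), (2 ^ (R.card + 1) - 1)) ∧
    (∑ J : Finset (Fin n), ((Hmat n * Mobmat n) I J).natAbs) = 3 ^ I.card := by
  rw [otherRuns_eq_ite]
  exact ⟨(row_sums_ab n I).1, (row_sums_ab n I).2, row_sums_h n I⟩
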